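/- Let n ≥ 6 and let A, B, C, D be four distinct vertices of K_n. Consider the position of n-Sim consisting of exactly three colored edges: the green edges AB and BC, and the red edge AD, with all other edges of K_n uncolored and PII to move. Then PII has a winning strategy from this position. -/

import Mathlib

/-- The set of valid (non-loop) edges of the complete graph on `Fin n`. -/
def simEdges (n : ℕ) : Finset (Sym2 (Fin n)) :=
  Finset.univ.filter (fun e => ¬ e.IsDiag)

/-- An edge set `S` contains a triangle: three edges of `S` spanned by three
distinct vertices. -/
def HasTriangle {n : ℕ} (S : Finset (Sym2 (Fin n))) : Prop :=
  ∃ a b c : Fin n, a ≠ b ∧ a ≠ c ∧ b ≠ c ∧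
    s(a, b) ∈ S ∧ s(a, c) ∈ S ∧ s(b, c) ∈ S

/-- The uncolored edges, given the two players' edge sets. -/
def avail {n : ℕ} (A B : Finset (Sym2 (Fin n))) : Finset (Sym2 (Fin n)) :=
  simEdges n \ (A ∪ B)

/-- `MoverWins own opp` : in the game of n-Sim (players alternately claim an
uncolored edge of `K n`, and whoever first has a triangle in their own edges
loses), the player about to move, whose already-claimed edges are `own` while
the opponent's are `opp`, has a winning strategy.

The mover wins iff they can claim some uncolored edge `e` not creating a
triangle in their own color, so that afterwards the opponent still has to move
(there is an uncolored edge left; otherwise the game is a draw), and every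
reply `f` of the opponent either completes a triangle in the opponent's color
(so the opponent loses) or leads to a position where the original mover again
wins. -/
inductive MoverWins {n : ℕ} : Finset (Sym2 (Fin n)) → Finset (Sym2 (Fin n)) → Prop where
  | step (own opp : Finset (Sym2 (Fin n))) (e : Sym2 (Fin n))
      (he : e ∈ avail own opp)
      (hsafe : ¬ HasTriangle (insert e own))
      (hne : (avail opp (insert e own)).Nonempty)
      (hreplies : ∀ f ∈ avail opp (insert e own), ¬ HasTriangle (insert f opp) →
        MoverWins (insert e own) (insert f opp)) :
      MoverWins own opp

/-- `NonMoverWins own opp` : the player NOT about to move (the one whose edges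
are `opp`) has a winning strategy: there is at least one uncolored edge (the
mover must move), and every non-losing move of the mover leads to a position
won by the (new) mover, i.e. by the original non-mover. -/
def NonMoverWins {n : ℕ} (own opp : Finset (Sym2 (Fin n))) : Prop :=
  (avail own opp).Nonempty ∧
    ∀ e ∈ avail own opp, ¬ HasTriangle (insert e own) →
      MoverWins opp (insert e own)

/-- The green edges of a drawn `K₅` on the five distinct vertices
`v 0, …, v 4`: the pentagon `v i — v (i+1)`. -/
def greenK5 {n : ℕ} (v : Fin 5 → Fin n) : Finset (Sym2 (Fin n)) :=
  Finset.univ.image (fun i : Fin 5 => s(v i, v (i + 1)))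

/-- The red edges of a drawn `K₅` on the five distinct vertices
`v 0, …, v 4`: the complementary pentagram `v i — v (i+2)`. -/
def redK5 {n : ℕ} (v : Fin 5 → Fin n) : Finset (Sym2 (Fin n)) :=
  Finset.univ.image (fun i : Fin 5 => s(v i, v (i + 2)))

theorem HasTriangle.mono {n : ℕ} {S T : Finset (Sym2 (Fin n))} (h : S ⊆ T)
    (hS : HasTriangle S) : HasTriangle T := by
  obtain ⟨a, b, c, h1, h2, h3, h4, h5, h6⟩ := hS
  exact ⟨a, b, c, h1, h2, h3, h h4, h h5, h h6⟩

theorem mem_avail_iff {n : ℕ} {S T : Finset (Sym2 (Fin n))} {e : Sym2 (Fin n)} :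
    e ∈ avail S T ↔ ¬ e.IsDiag ∧ e ∉ S ∧ e ∉ T := by
  simp [avail, simEdges]

/-- Ramsey bound `R(3,3) ≤ 6`: no draws when `n ≥ 6`. -/
theorem avail_nonempty {n : ℕ} (hn : 6 ≤ n) {S T : Finset (Sym2 (Fin n))}
    (hS : ¬ HasTriangle S) (hT : ¬ HasTriangle T) : (avail S T).Nonempty := by
  by_contra hne
  have hcol : ∀ i j : Fin n, i ≠ j → s(i, j) ∈ S ∨ s(i, j) ∈ T := by
    intro i j hij
    by_contra hc
    push Not at hc
    exact hne ⟨s(i, j), mem_avail_iff.2 ⟨by simpa using hij, hc.1, hc.2⟩⟩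
  have key : ∀ P Q : Finset (Sym2 (Fin n)), ¬ HasTriangle P → ¬ HasTriangle Q →
      (∀ i j : Fin n, i ≠ j → s(i, j) ∈ P ∨ s(i, j) ∈ Q) →
      ∀ v x y z : Fin n, v ≠ x → v ≠ y → v ≠ z → x ≠ y → x ≠ z → y ≠ z →
      s(v, x) ∈ P → s(v, y) ∈ P → s(v, z) ∈ P → False := by
    intro P Q hP hQ hPQ v x y z h1 h2 h3 h4 h5 h6 p1 p2 p3
    have q1 : s(x, y) ∈ Q :=
      (hPQ x y h4).resolve_left fun h => hP ⟨v, x, y, h1, h2, h4, p1, p2, h⟩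
    have q2 : s(x, z) ∈ Q :=
      (hPQ x z h5).resolve_left fun h => hP ⟨v, x, z, h1, h3, h5, p1, p3, h⟩
    have q3 : s(y, z) ∈ Q :=
      (hPQ y z h6).resolve_left fun h => hP ⟨v, y, z, h2, h3, h6, p2, p3, h⟩
    exact hQ ⟨x, y, z, h4, h5, h6, q1, q2, q3⟩
  have kS := key S T hS hT hcol
  have kT := key T S hT hS fun i j hij => (hcol i j hij).symm
  let w : Fin 6 → Fin n := Fin.castLE hn
  have hw : ∀ i j : Fin 6, i ≠ j → w i ≠ w j := fun i j hij h =>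
    hij (Fin.castLE_injective hn h)
  have kS' : ∀ i j k : Fin 6, 0 ≠ i → 0 ≠ j → 0 ≠ k → i ≠ j → i ≠ k → j ≠ k →
      s(w 0, w i) ∈ S → s(w 0, w j) ∈ S → s(w 0, w k) ∈ S → False :=
    fun i j k h1 h2 h3 h4 h5 h6 => kS _ _ _ _ (hw _ _ h1) (hw _ _ h2) (hw _ _ h3)
      (hw _ _ h4) (hw _ _ h5) (hw _ _ h6)
  have kT' : ∀ i j k : Fin 6, 0 ≠ i → 0 ≠ j → 0 ≠ k → i ≠ j → i ≠ k → j ≠ k →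
      s(w 0, w i) ∈ T → s(w 0, w j) ∈ T → s(w 0, w k) ∈ T → False :=
    fun i j k h1 h2 h3 h4 h5 h6 => kT _ _ _ _ (hw _ _ h1) (hw _ _ h2) (hw _ _ h3)
      (hw _ _ h4) (hw _ _ h5) (hw _ _ h6)
  have c1 := hcol (w 0) (w 1) (hw _ _ (by decide))
  have c2 := hcol (w 0) (w 2) (hw _ _ (by decide))
  have c3 := hcol (w 0) (w 3) (hw _ _ (by decide))
  have c4 := hcol (w 0) (w 4) (hw _ _ (by decide))
  have c5 := hcol (w 0) (w 5) (hw _ _ (by decide))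
  have S1 := kS' 1 2 3 (by decide) (by decide) (by decide) (by decide) (by decide) (by decide)
  have S2 := kS' 1 2 4 (by decide) (by decide) (by decide) (by decide) (by decide) (by decide)
  have S3 := kS' 1 2 5 (by decide) (by decide) (by decide) (by decide) (by decide) (by decide)
  have S4 := kS' 1 3 4 (by decide) (by decide) (by decide) (by decide) (by decide) (by decide)
  have S5 := kS' 1 3 5 (by decide) (by decide) (by decide) (by decide) (by decide) (by decide)
  have S6 := kS' 1 4 5 (by decide) (by decide) (by decide) (by decide) (by decide) (by decide)
  have S7 := kS' 2 3 4 (by decide) (by decide) (by decide) (by decide) (by decide) (by decide)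
  have S8 := kS' 2 3 5 (by decide) (by decide) (by decide) (by decide) (by decide) (by decide)
  have S9 := kS' 2 4 5 (by decide) (by decide) (by decide) (by decide) (by decide) (by decide)
  have S0 := kS' 3 4 5 (by decide) (by decide) (by decide) (by decide) (by decide) (by decide)
  have T1 := kT' 1 2 3 (by decide) (by decide) (by decide) (by decide) (by decide) (by decide)
  have T2 := kT' 1 2 4 (by decide) (by decide) (by decide) (by decide) (by decide) (by decide)
  have T3 := kT' 1 2 5 (by decide) (by decide) (by decide) (by decide) (by decide) (by decide)
  have T4 := kT' 1 3 4 (by decide) (by decide) (by decide) (by decide) (by decide) (by decide)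
  have T5 := kT' 1 3 5 (by decide) (by decide) (by decide) (by decide) (by decide) (by decide)
  have T6 := kT' 1 4 5 (by decide) (by decide) (by decide) (by decide) (by decide) (by decide)
  have T7 := kT' 2 3 4 (by decide) (by decide) (by decide) (by decide) (by decide) (by decide)
  have T8 := kT' 2 3 5 (by decide) (by decide) (by decide) (by decide) (by decide) (by decide)
  have T9 := kT' 2 4 5 (by decide) (by decide) (by decide) (by decide) (by decide) (by decide)
  have T0 := kT' 3 4 5 (by decide) (by decide) (by decide) (by decide) (by decide) (by decide)
  clear kS' kT' kS kT key hw hcol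
  rcases c1 with c1 | c1 <;> rcases c2 with c2 | c2 <;> rcases c3 with c3 | c3 <;>
    rcases c4 with c4 | c4 <;> rcases c5 with c5 | c5 <;>
    first
    | exact S1 c1 c2 c3 | exact S2 c1 c2 c4 | exact S3 c1 c2 c5 | exact S4 c1 c3 c4
    | exact S5 c1 c3 c5 | exact S6 c1 c4 c5 | exact S7 c2 c3 c4 | exact S8 c2 c3 c5
    | exact S9 c2 c4 c5 | exact S0 c3 c4 c5
    | exact T1 c1 c2 c3 | exact T2 c1 c2 c4 | exact T3 c1 c2 c5 | exact T4 c1 c3 c4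
    | exact T5 c1 c3 c5 | exact T6 c1 c4 c5 | exact T7 c2 c3 c4 | exact T8 c2 c3 c5
    | exact T9 c2 c4 c5 | exact T0 c3 c4 c5

/-- Determinacy: since there are no draws, one of the two players wins. -/
theorem moverWins_or_nonMoverWins {n : ℕ} (hn : 6 ≤ n) :
    ∀ (k : ℕ) (own opp : Finset (Sym2 (Fin n))), (avail own opp).card ≤ k →
      ¬ HasTriangle own → ¬ HasTriangle opp →
      MoverWins own opp ∨ NonMoverWins own opp := by
  intro k
  induction k with
  | zero =>
    intro own opp hk h1 h2
    have := (avail_nonempty hn h1 h2).card_pos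
    omega
  | succ k ih =>
    intro own opp hk h1 h2
    by_cases hw : MoverWins own opp
    · exact Or.inl hw
    right
    refine ⟨avail_nonempty hn h1 h2, fun e he hsafe => ?_⟩
    have hex : ∃ f ∈ avail opp (insert e own), ¬ HasTriangle (insert f opp) ∧
        ¬ MoverWins (insert e own) (insert f opp) := by
      by_contra hc
      push Not at hc
      exact hw (MoverWins.step own opp e he hsafe (avail_nonempty hn h2 hsafe) hc)
    obtain ⟨f, hf, hfs, hfw⟩ := hex
    have hlt : (avail (insert e own) (insert f opp)).card < (avail own opp).card := by
      apply Finset.card_lt_card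
      refine (Finset.ssubset_iff_of_subset ?_).2 ⟨e, he, ?_⟩
      · intro x hx
        rw [mem_avail_iff] at hx ⊢
        exact ⟨hx.1, fun h => hx.2.1 (Finset.mem_insert_of_mem h),
          fun h => hx.2.2 (Finset.mem_insert_of_mem h)⟩
      · rw [mem_avail_iff]
        exact fun h => h.2.1 (Finset.mem_insert_self _ _)
    have hN := (ih (insert e own) (insert f opp) (by omega) hsafe hfs).resolve_left hfw
    exact MoverWins.step opp (insert e own) f hf hfs hN.1 hN.2

/-- Extra edges of the loser which the winner could not play anyway do no harm to the winner. -/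
theorem MoverWins.mono {n : ℕ} (hn : 6 ≤ n) {W L : Finset (Sym2 (Fin n))}
    (h : MoverWins W L) : ∀ L' : Finset (Sym2 (Fin n)), L ⊆ L' → ¬ HasTriangle L' →
      (∀ x ∈ L', x ∉ L → HasTriangle (insert x W)) → MoverWins W L' := by
  induction h with
  | step W L e he hsafe hne hrep ih =>
    intro L' hL hT hdead
    rw [mem_avail_iff] at he
    have heL' : e ∉ L' := fun h => hsafe (hdead e h he.2.2)
    refine MoverWins.step W L' e (mem_avail_iff.2 ⟨he.1, he.2.1, heL'⟩) hsafe
      (avail_nonempty hn hT hsafe) fun f hf hfs => ?_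
    rw [mem_avail_iff] at hf
    have hsub : insert f L ⊆ insert f L' := Finset.insert_subset_insert f hL
    refine ih f (mem_avail_iff.2 ⟨hf.1, fun h => hf.2.1 (hL h), hf.2.2⟩)
      (fun h => hfs (h.mono hsub)) (insert f L') hsub hfs fun x hx hxL => ?_
    rw [Finset.mem_insert] at hx hxL
    push Not at hxL
    exact (hdead x (hx.resolve_left hxL.1) hxL.2).mono
      (Finset.insert_subset_insert x (Finset.subset_insert e W))

/-- Relabelling of edge sets along a permutation of the vertices. -/
def moveEdges {n : ℕ} (σ : Equiv.Perm (Fin n)) (S : Finset (Sym2 (Fin n))) :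
    Finset (Sym2 (Fin n)) := S.image (Sym2.map σ)

theorem mem_moveEdges {n : ℕ} (σ : Equiv.Perm (Fin n)) {S : Finset (Sym2 (Fin n))}
    {e : Sym2 (Fin n)} : Sym2.map σ e ∈ moveEdges σ S ↔ e ∈ S := by
  unfold moveEdges
  exact (Sym2.map.injective σ.injective).mem_finset_image

theorem hasTriangle_moveEdges {n : ℕ} (σ : Equiv.Perm (Fin n)) {S : Finset (Sym2 (Fin n))} :
    HasTriangle (moveEdges σ S) ↔ HasTriangle S := by
  constructor
  · rintro ⟨a, b, c, h1, h2, h3, h4, h5, h6⟩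
    refine ⟨σ.symm a, σ.symm b, σ.symm c, by simpa using h1, by simpa using h2,
      by simpa using h3, ?_, ?_, ?_⟩ <;> rw [← mem_moveEdges σ] <;> simpa
  · rintro ⟨a, b, c, h1, h2, h3, h4, h5, h6⟩
    refine ⟨σ a, σ b, σ c, by simpa using h1, by simpa using h2, by simpa using h3, ?_, ?_, ?_⟩
    · exact (mem_moveEdges σ (e := s(a, b))).2 h4
    · exact (mem_moveEdges σ (e := s(a, c))).2 h5
    · exact (mem_moveEdges σ (e := s(b, c))).2 h6

theorem moveEdges_insert {n : ℕ} (σ : Equiv.Perm (Fin n)) (e : Sym2 (Fin n))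
    (S : Finset (Sym2 (Fin n))) :
    moveEdges σ (insert e S) = insert (Sym2.map σ e) (moveEdges σ S) := by
  simp [moveEdges, Finset.image_insert]

theorem avail_moveEdges {n : ℕ} (σ : Equiv.Perm (Fin n)) {S T : Finset (Sym2 (Fin n))}
    {e : Sym2 (Fin n)} :
    Sym2.map σ e ∈ avail (moveEdges σ S) (moveEdges σ T) ↔ e ∈ avail S T := by
  rw [mem_avail_iff, mem_avail_iff, mem_moveEdges, mem_moveEdges]
  have : (Sym2.map σ e).IsDiag ↔ e.IsDiag := by
    induction e with
    | _ a b => simp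
  rw [this]

theorem exists_map {n : ℕ} (σ : Equiv.Perm (Fin n)) (f : Sym2 (Fin n)) :
    ∃ g, f = Sym2.map σ g := by
  induction f with
  | _ a b => exact ⟨s(σ.symm a, σ.symm b), by simp⟩

theorem MoverWins.moveEdges {n : ℕ} (σ : Equiv.Perm (Fin n)) {S T : Finset (Sym2 (Fin n))}
    (h : MoverWins S T) : MoverWins (moveEdges σ S) (_root_.moveEdges σ T) := by
  induction h with
  | step S T e he hsafe hne hrep ih =>
    refine MoverWins.step _ _ (Sym2.map σ e) ((avail_moveEdges σ).2 he) ?_ ?_ ?_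
    · rwa [← moveEdges_insert, hasTriangle_moveEdges]
    · obtain ⟨x, hx⟩ := hne
      rw [← moveEdges_insert]
      exact ⟨_, (avail_moveEdges σ).2 hx⟩
    · intro f hf hfs
      obtain ⟨g, rfl⟩ := exists_map σ f
      rw [← moveEdges_insert] at hf hfs ⊢
      rw [← moveEdges_insert]
      exact ih g ((avail_moveEdges σ).1 hf) fun h => hfs ((hasTriangle_moveEdges σ).2 h)

theorem NonMoverWins.moveEdges {n : ℕ} (σ : Equiv.Perm (Fin n)) {S T : Finset (Sym2 (Fin n))}
    (h : NonMoverWins S T) : NonMoverWins (_root_.moveEdges σ S) (_root_.moveEdges σ T) := by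
  obtain ⟨⟨x, hx⟩, h⟩ := h
  refine ⟨⟨_, (avail_moveEdges σ).2 hx⟩, fun f hf hfs => ?_⟩
  obtain ⟨g, rfl⟩ := exists_map σ f
  rw [← moveEdges_insert] at hfs ⊢
  exact (h g ((avail_moveEdges σ).1 hf) fun h => hfs ((hasTriangle_moveEdges σ).2 h)).moveEdges σ

theorem not_hasTriangle_of_card {n : ℕ} {S : Finset (Sym2 (Fin n))} (hS : S.card ≤ 2) :
    ¬ HasTriangle S := by
  rintro ⟨a, b, c, h1, h2, h3, h4, h5, h6⟩
  have hsub : ({s(a, b), s(a, c), s(b, c)} : Finset (Sym2 (Fin n))) ⊆ S := by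
    intro x hx
    simp only [Finset.mem_insert, Finset.mem_singleton] at hx
    rcases hx with rfl | rfl | rfl <;> assumption
  have hc : ({s(a, b), s(a, c), s(b, c)} : Finset (Sym2 (Fin n))).card = 3 := by
    apply Finset.card_eq_three.2
    refine ⟨_, _, _, ?_, ?_, ?_, rfl⟩ <;> simp only [ne_eq, Sym2.eq_iff] <;> grind
  have := Finset.card_le_card hsub
  omega

/-- **Theorem 3.** For `n ≥ 6` and distinct vertices `A, B, C, D`, the position
with exactly three colored edges — green `AB` and `BC`, red `AD` — and PII
(red) to move, is a win for PII. -/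
theorem three_move_position_secondPlayerWin (n : ℕ) (hn : 6 ≤ n)
    (A B C D : Fin n) (hAB : A ≠ B) (hAC : A ≠ C) (hAD : A ≠ D)
    (hBC : B ≠ C) (hBD : B ≠ D) (hCD : C ≠ D) :
    MoverWins ({s(A, D)} : Finset (Sym2 (Fin n))) {s(A, B), s(B, C)} := by
  -- Strategy stealing: otherwise PI wins; then PII plays `BD`, after which `AB` is a pure
  -- burden for PI, and without it the position is the original one with colours exchanged.
  by_contra hcon
  have t1 : ¬ HasTriangle ({s(A, D)} : Finset (Sym2 (Fin n))) :=
    not_hasTriangle_of_card (by simp)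
  have t2 : ¬ HasTriangle ({s(A, B), s(B, C)} : Finset (Sym2 (Fin n))) :=
    not_hasTriangle_of_card Finset.card_le_two
  have t3 : ¬ HasTriangle ({s(B, D), s(A, D)} : Finset (Sym2 (Fin n))) :=
    not_hasTriangle_of_card Finset.card_le_two
  have hN := (moverWins_or_nonMoverWins hn _ _ _ le_rfl t1 t2).resolve_left hcon
  obtain ⟨σ, hA, hB, hC, hD⟩ : ∃ σ : Equiv.Perm (Fin n),
      σ A = B ∧ σ B = D ∧ σ C = A ∧ σ D = C := by
    refine ⟨Equiv.swap A B * Equiv.swap B D * Equiv.swap D C, ?_, ?_, ?_, ?_⟩ <;>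
      simp only [Equiv.Perm.mul_apply, Equiv.swap_apply_def] <;> grind
  have hN' := hN.moveEdges σ
  have e1 : moveEdges σ ({s(A, D)} : Finset (Sym2 (Fin n))) = {s(B, C)} := by
    simp [moveEdges, hA, hD]
  have e2 : moveEdges σ ({s(A, B), s(B, C)} : Finset (Sym2 (Fin n))) = {s(B, D), s(A, D)} := by
    simp [moveEdges, hA, hB, hC, Finset.image_insert, Sym2.eq_swap (a := D) (b := A)]
  rw [e1, e2] at hN'
  refine hcon (MoverWins.step _ _ s(B, D) ?_ t3 (avail_nonempty hn t2 t3) fun f hf hfs => ?_)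
  · rw [mem_avail_iff]
    simp only [Sym2.mk_isDiag_iff, Finset.mem_insert, Finset.mem_singleton, Sym2.eq_iff]
    grind
  rw [mem_avail_iff] at hf
  have hsub : ({s(B, C)} : Finset (Sym2 (Fin n))) ⊆ {s(A, B), s(B, C)} :=
    Finset.subset_insert _ _
  have hsub' := Finset.insert_subset_insert f hsub
  have hW := hN'.2 f (mem_avail_iff.2 ⟨hf.1, fun h => hf.2.1 (hsub h), hf.2.2⟩)
    fun h => hfs (h.mono hsub')
  refine hW.mono hn _ hsub' hfs fun x hx hxn => ?_
  have hxe : x = s(A, B) := by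
    simp only [Finset.mem_insert, Finset.mem_singleton] at hx hxn
    tauto
  subst hxe
  exact ⟨A, B, D, hAB, hAD, hBD, by simp, by simp, by simp⟩
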